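/- Let ≈ be the least congruence on PGA-programs that contains associativity of concatenation ((X;Y);Z ≈ X;(Y;Z)) and the unfolding law (X^ω ≈ X;X^ω), and that is closed under the proof rule: if X ≈ Y;X then X ≈ Y^ω. Then ≈ validates PGA2 ((X^n)^ω ≈ X^ω for n ≥ 1), PGA3 (X^ω;Y ≈ X^ω) and PGA4 ((X;Y)^ω ≈ X;(Y;X)^ω). -/

import Mathlib

/-- Primitive instructions over a set `A` of basic instructions:
basic instructions `a`, positive tests `+a`, negative tests `-a`,
jump instructions `#k` and the termination instruction `!`. -/
inductive PrimInstr (A : Type) : Type where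
  | basic (a : A)
  | pos (a : A)
  | neg (a : A)
  | jump (k : Nat)
  | halt
deriving DecidableEq

/-- PGA-programs over `A`: primitive instructions, concatenation `X;Y`
and repetition `X^ω`. -/
inductive PGA (A : Type) : Type where
  | prim (u : PrimInstr A)
  | seq (X Y : PGA A)
  | rep (X : PGA A)
deriving DecidableEq

/-- `X.pow n` is the power `X^n` for `n ≥ 1`: `X^1 = X` and `X^(n+1) = X ; X^n`.
(The value at `0` is irrelevant and set to `X`; all statements only use `n ≥ 1`.) -/
def PGA.pow {A : Type} (X : PGA A) : Nat → PGA A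
  | 0 => X
  | 1 => X
  | n+2 => X.seq (X.pow (n+1))

/-- The least congruence on PGA-programs containing associativity of
concatenation and the unfolding law, closed under the proof rule
`X ≈ Y ; X → X ≈ Y^ω`. -/
inductive UApprox {A : Type} : PGA A → PGA A → Prop
  | refl (X : PGA A) : UApprox X X
  | symm {X Y : PGA A} : UApprox X Y → UApprox Y X
  | trans {X Y Z : PGA A} : UApprox X Y → UApprox Y Z → UApprox X Z
  | seq_congr {X X' Y Y' : PGA A} : UApprox X X' → UApprox Y Y' → UApprox (X.seq Y) (X'.seq Y')
  | rep_congr {X Y : PGA A} : UApprox X Y → UApprox X.rep Y.rep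
  | assoc (X Y Z : PGA A) : UApprox ((X.seq Y).seq Z) (X.seq (Y.seq Z))
  | unfold (X : PGA A) : UApprox X.rep (X.seq X.rep)
  | fix {X Y : PGA A} : UApprox X (Y.seq X) → UApprox X Y.rep

/-- The least congruence containing associativity and the unfolding law and
closed under the rule `X ≈ Y ; X ⇒ X ≈ Y^ω` validates PGA2, PGA3 and PGA4. -/
theorem unfolding_plus_rule_validates_PGA2_3_4 (A : Type) :
    (∀ (X : PGA A) (n : ℕ), 1 ≤ n → UApprox ((X.pow n).rep) X.rep) ∧
    (∀ X Y : PGA A, UApprox (X.rep.seq Y) X.rep) ∧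
    (∀ X Y : PGA A, UApprox ((X.seq Y).rep) (X.seq ((Y.seq X).rep))) := by
  refine ⟨?_, ?_, ?_⟩
  · intro X n hn
    have key : ∀ m : ℕ, UApprox X.rep ((X.pow (m+1)).seq X.rep) := by
      intro m
      induction m with
      | zero => exact UApprox.unfold X
      | succ k ih =>
        exact ((UApprox.unfold X).trans (UApprox.seq_congr (UApprox.refl X) ih)).trans
          (UApprox.assoc X (X.pow (k+1)) X.rep).symm
    obtain ⟨m, rfl⟩ : ∃ m, n = m + 1 := ⟨n - 1, by omega⟩
    exact (UApprox.fix (key m)).symm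
  · intro X Y
    exact UApprox.fix ((UApprox.seq_congr (UApprox.unfold X) (UApprox.refl Y)).trans
      (UApprox.assoc X X.rep Y))
  · intro X Y
    refine (UApprox.fix ?_).symm
    refine UApprox.trans ?_ (UApprox.assoc X Y _).symm
    exact UApprox.seq_congr (UApprox.refl X)
      ((UApprox.unfold (Y.seq X)).trans (UApprox.assoc Y X _))
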